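/- Let b be a positive divisor of d and let U be a unitary matrix on ℂ^d such that U Z^b U† is a unimodular scalar multiple of some GPM. Let s, t be integers and write t = p·b + r with 0 ≤ r < b (division with remainder). Then U (X^s Z^t) U† is a unimodular scalar multiple of some GPM if and only if U (X^s Z^r) U† is a unimodular scalar multiple of some GPM. -/

import Mathlib

open Matrix

/-- The primitive `d`-th root of unity `ω = e^{2πi/d}`. -/
noncomputable def omega (d : ℕ) : ℂ := Complex.exp (2 * Real.pi * Complex.I / d)

/-- The power `X^s` (for any integer `s`) of the shift matrix `X` on `ℂ^d`,
`X|j⟩ = |j+1 mod d⟩`; its `(i,j)` entry is `1` iff `i ≡ j + s (mod d)`. -/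
def Xpow (d : ℕ) (s : ℤ) : Matrix (Fin d) (Fin d) ℂ :=
  Matrix.of fun i j => if (i : ℤ) = (((j : ℕ) : ℤ) + s) % (d : ℤ) then (1 : ℂ) else 0

/-- The power `Z^t` (for any integer `t`) of the clock matrix `Z` on `ℂ^d`,
`Z|j⟩ = ω^j |j⟩`; it is diagonal with entries `ω^{t·j} = e^{2πi·t·j/d}`. -/
noncomputable def Zpow (d : ℕ) (t : ℤ) : Matrix (Fin d) (Fin d) ℂ :=
  Matrix.diagonal fun j => Complex.exp (2 * Real.pi * Complex.I * (t : ℂ) * ((j : ℕ) : ℂ) / (d : ℂ))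

/-- The generalized Pauli matrix `X^s Z^t` on `ℂ^d`. -/
noncomputable def GPM (d : ℕ) (s t : ℤ) : Matrix (Fin d) (Fin d) ℂ :=
  Xpow d s * Zpow d t

/-- `A ≈ B` : equality up to a unimodular (global phase) scalar. -/
def PhaseEq {n : Type*} (A B : Matrix n n ℂ) : Prop :=
  ∃ c : ℂ, ‖c‖ = 1 ∧ A = c • B


/-- `A` is a unimodular scalar multiple of some generalized Pauli matrix on `ℂ^d`. -/
def GPMScalar (d : ℕ) (A : Matrix (Fin d) (Fin d) ℂ) : Prop :=
  ∃ (c : ℂ) (m n : ℤ), ‖c‖ = 1 ∧ A = c • GPM d m n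

/-- The `d`-th root of unity `e^{2πi·n/d}`. -/
noncomputable def rootPhase (d : ℕ) (n : ℤ) : ℂ :=
  Complex.exp (2 * Real.pi * Complex.I * (n : ℂ) / (d : ℂ))

lemma rootPhase_add (d : ℕ) (m n : ℤ) :
    rootPhase d (m + n) = rootPhase d m * rootPhase d n := by
  rw [rootPhase, rootPhase, rootPhase, ← Complex.exp_add]
  congr 1
  push_cast
  ring

lemma rootPhase_natCast_mul {d : ℕ} (hd : d ≠ 0) (k : ℤ) : rootPhase d (d * k) = 1 := by
  have hd' : (d : ℂ) ≠ 0 := Nat.cast_ne_zero.mpr hd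
  rw [rootPhase, Complex.exp_eq_one_iff]
  refine ⟨k, ?_⟩
  push_cast
  field_simp

lemma norm_rootPhase (d : ℕ) (n : ℤ) : ‖rootPhase d n‖ = 1 := by
  have h : (2 * Real.pi * Complex.I * (n : ℂ) / (d : ℂ) : ℂ)
      = ((2 * Real.pi * n / d : ℝ) : ℂ) * Complex.I := by
    push_cast
    ring
  rw [rootPhase, h, Complex.norm_exp_ofReal_mul_I]

lemma rootPhase_mul_emod {d : ℕ} (hd : d ≠ 0) (t n : ℤ) :
    rootPhase d (t * (n % d)) = rootPhase d (t * n) := by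
  have h : t * n = t * (n % d) + d * (t * (n / d)) := by
    linear_combination (-t) * Int.emod_add_mul_ediv n d
  rw [h, rootPhase_add, rootPhase_natCast_mul hd, mul_one]

lemma Zpow_eq_diagonal (d : ℕ) (t : ℤ) :
    Zpow d t = Matrix.diagonal fun j : Fin d => rootPhase d (t * ((j : ℕ) : ℤ)) := by
  simp only [Zpow, rootPhase]
  congr 1
  funext j
  push_cast
  congr 1
  ring

lemma Zpow_add (d : ℕ) (s t : ℤ) : Zpow d (s + t) = Zpow d s * Zpow d t := by
  simp only [Zpow_eq_diagonal, Matrix.diagonal_mul_diagonal, add_mul, rootPhase_add]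

lemma Zpow_natCast_mul {d : ℕ} (hd : d ≠ 0) (k : ℤ) : Zpow d (d * k) = 1 := by
  simp only [Zpow_eq_diagonal, mul_assoc, rootPhase_natCast_mul hd, Matrix.diagonal_one]

lemma Zpow_zero (d : ℕ) : Zpow d 0 = 1 := by
  simp [Zpow]

lemma Xpow_zero (d : ℕ) : Xpow d 0 = 1 := by
  ext i j
  have hj : ((j : ℕ) : ℤ) % d = j := Int.emod_eq_of_lt (by positivity) (by exact_mod_cast j.isLt)
  simp [Xpow, hj, Matrix.one_apply, Fin.ext_iff]

lemma Xpow_add {d : ℕ} (hd : d ≠ 0) (s t : ℤ) : Xpow d (s + t) = Xpow d s * Xpow d t := by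
  have hd' : (0 : ℤ) < d := by exact_mod_cast Nat.pos_of_ne_zero hd
  ext i j
  have h0 := Int.emod_nonneg (((j : ℕ) : ℤ) + t) hd'.ne'
  have h1 := Int.emod_lt_of_pos (((j : ℕ) : ℤ) + t) hd'
  let k : Fin d := ⟨((((j : ℕ) : ℤ) + t) % d).toNat, by omega⟩
  have hk : ((k : ℕ) : ℤ) = (((j : ℕ) : ℤ) + t) % d := Int.toNat_of_nonneg h0
  rw [Matrix.mul_apply, Finset.sum_eq_single k]
  · simp only [Xpow, Matrix.of_apply, hk, if_true, mul_one, Int.emod_add_emod]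
    congr 3
    ring
  · intro l _ hl
    have : ((l : ℕ) : ℤ) ≠ (((j : ℕ) : ℤ) + t) % d := by
      rw [← hk]
      exact fun h => hl (Fin.ext (by exact_mod_cast h))
    simp [Xpow, this]
  · simp

lemma Zpow_mul_Xpow {d : ℕ} (hd : d ≠ 0) (s t : ℤ) :
    Zpow d t * Xpow d s = rootPhase d (t * s) • (Xpow d s * Zpow d t) := by
  ext i j
  rw [Zpow_eq_diagonal, Matrix.smul_apply, Matrix.diagonal_mul, Matrix.mul_diagonal]
  by_cases h : (i : ℤ) = (((j : ℕ) : ℤ) + s) % (d : ℤ)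
  · simp only [Xpow, Matrix.of_apply, h, if_true, rootPhase_mul_emod hd, mul_add, rootPhase_add,
      smul_eq_mul]
    ring
  · simp [Xpow, h]

lemma GPM_mul_GPM {d : ℕ} (hd : d ≠ 0) (m n m' n' : ℤ) :
    GPM d m n * GPM d m' n' = rootPhase d (n * m') • GPM d (m + m') (n + n') := by
  calc GPM d m n * GPM d m' n'
      = Xpow d m * (Zpow d n * Xpow d m') * Zpow d n' := by simp only [GPM, mul_assoc]
    _ = rootPhase d (n * m') • GPM d (m + m') (n + n') := by
      simp only [Zpow_mul_Xpow hd, GPM, Xpow_add hd, Zpow_add, Matrix.mul_smul, Matrix.smul_mul,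
        mul_assoc]

lemma GPMScalar.mul {d : ℕ} (hd : d ≠ 0) {A B : Matrix (Fin d) (Fin d) ℂ}
    (hA : GPMScalar d A) (hB : GPMScalar d B) : GPMScalar d (A * B) := by
  obtain ⟨c, m, n, hc, rfl⟩ := hA
  obtain ⟨c', m', n', hc', rfl⟩ := hB
  refine ⟨c * c' * rootPhase d (n * m'), m + m', n + n', ?_, ?_⟩
  · simp [hc, hc', norm_rootPhase]
  · rw [Matrix.smul_mul, Matrix.mul_smul, GPM_mul_GPM hd, smul_smul, smul_smul, mul_assoc]

lemma GPMScalar.one (d : ℕ) : GPMScalar d 1 :=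
  ⟨1, 0, 0, norm_one, by rw [GPM, Xpow_zero, Zpow_zero, one_smul, mul_one]⟩

lemma unitary_conj_mul {n : Type*} [Fintype n] [DecidableEq n] {U : Matrix n n ℂ}
    (hU : U ∈ Matrix.unitaryGroup n ℂ) (A B : Matrix n n ℂ) :
    U * (A * B) * Uᴴ = U * A * Uᴴ * (U * B * Uᴴ) := by
  have h : Uᴴ * U = 1 := Matrix.mem_unitaryGroup_iff'.mp hU
  calc U * (A * B) * Uᴴ = U * A * 1 * (B * Uᴴ) := by simp only [mul_one, mul_assoc]
    _ = U * A * Uᴴ * (U * B * Uᴴ) := by rw [← h]; simp only [mul_assoc]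

section Conjugation

variable {d : ℕ} {U : Matrix (Fin d) (Fin d) ℂ} {b : ℤ}

lemma GPMScalar.conj_Zpow_natCast_mul (hd : d ≠ 0) (hU : U ∈ Matrix.unitaryGroup (Fin d) ℂ)
    (h : GPMScalar d (U * Zpow d b * Uᴴ)) (k : ℕ) : GPMScalar d (U * Zpow d (k * b) * Uᴴ) := by
  induction k with
  | zero =>
    have hU' : U * Uᴴ = 1 := Matrix.mem_unitaryGroup_iff.mp hU
    simpa [Zpow_zero, hU'] using GPMScalar.one d
  | succ k ih =>
    rw [Nat.cast_succ, add_mul, one_mul, Zpow_add, unitary_conj_mul hU]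
    exact ih.mul hd h

lemma GPMScalar.conj_Zpow_mul (hd : d ≠ 0) (hU : U ∈ Matrix.unitaryGroup (Fin d) ℂ)
    (h : GPMScalar d (U * Zpow d b * Uᴴ)) (k : ℤ) : GPMScalar d (U * Zpow d (k * b) * Uᴴ) := by
  have hk : k * b = ((k % d).toNat : ℤ) * b + d * (k / d * b) := by
    rw [Int.toNat_of_nonneg (Int.emod_nonneg k (Nat.cast_ne_zero.mpr hd))]
    linear_combination (-b) * Int.emod_add_mul_ediv k d
  rw [hk, Zpow_add, Zpow_natCast_mul hd, mul_one]
  exact h.conj_Zpow_natCast_mul hd hU _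

lemma GPMScalar.conj_GPM_add_mul (hd : d ≠ 0) (hU : U ∈ Matrix.unitaryGroup (Fin d) ℂ)
    (h : GPMScalar d (U * Zpow d b * Uᴴ)) {s t : ℤ} (k : ℤ)
    (hst : GPMScalar d (U * GPM d s t * Uᴴ)) : GPMScalar d (U * GPM d s (t + k * b) * Uᴴ) := by
  rw [GPM, Zpow_add, ← mul_assoc (Xpow d s), unitary_conj_mul hU]
  exact hst.mul hd (h.conj_Zpow_mul hd hU k)

end Conjugation

/-- **division algorithm step.** If `b ∣ d` is positive, `U` is unitary with
`U Z^b U†` a unimodular multiple of a GPM, and `t = p·b + r` with `0 ≤ r < b`, then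
`U (X^s Z^t) U†` is a unimodular multiple of a GPM iff `U (X^s Z^r) U†` is. -/
theorem division_algorithm_step (d : ℕ) (hd : 2 ≤ d) (b : ℕ) (hb0 : 0 < b) (hb : b ∣ d)
    (U : Matrix (Fin d) (Fin d) ℂ) (hU : U ∈ Matrix.unitaryGroup (Fin d) ℂ)
    (hUZ : GPMScalar d (U * Zpow d (b : ℤ) * Uᴴ))
    (s t p r : ℤ) (ht : t = p * b + r) (hr0 : 0 ≤ r) (hr : r < b) :
    GPMScalar d (U * GPM d s t * Uᴴ) ↔ GPMScalar d (U * GPM d s r * Uᴴ) := by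
  have hd0 : d ≠ 0 := by omega
  subst ht
  refine ⟨fun h => ?_, fun h => ?_⟩
  · have hr' : r = p * b + r + -p * b := by ring
    rw [hr']
    exact hUZ.conj_GPM_add_mul hd0 hU (-p) h
  · rw [add_comm]
    exact hUZ.conj_GPM_add_mul hd0 hU p h
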